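/- Invariance of the product measure for the decomposable misanthrope generator: let n ≥ 1, α > 0, p(d) = ‖d‖^{-(n+α)} 1(d > 0), and assume additionally that g satisfies |g(k+1) − g(k)| ≤ κ for all k (so g(k) ≤ κk), that h is bounded, and that g(i) h(j) − g(j) h(i) = g(i) h(0) − g(j) h(0) for all i, j ∈ ℕ. Fix 0 ≤ λ < λ_c and let ν = ⊗_{x ∈ ℤ^n} Θ_λ be the product probability measure on ℕ^{ℤ^n}. For η ∈ ℕ^{ℤ^n} and x ≠ y, let η^{x,y} be the configuration obtained from η by decreasing η(x) by one (truncated at 0, which is immaterial since g(0) = 0) and increasing η(y) by one. Then for every bounded measurable f : ℕ^{ℤ^n} → ℝ depending on only finitely many coordinates, the family (x, d) ↦ p(d) ∫ g(η(x)) h(η(x+d)) ( f(η^{x, x+d}) − f(η) ) dν(η), indexed by x ∈ ℤ^n and d ∈ ℤ^n with d > 0, is absolutely summable and its sum equals 0. -/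

import Mathlib

open scoped BigOperators

/-- The coefficients `a_k = (∏_{j=0}^{k-1} h(j)) / (∏_{j=1}^{k} g(j))`, with `a_0 = 1`. -/
noncomputable def coefA (g h : ℕ → ℝ) (k : ℕ) : ℝ :=
  (∏ j ∈ Finset.range k, h j) / ∏ j ∈ Finset.range k, g (j + 1)

/-- The partition function `Z(λ) = Σ_{k ≥ 0} a_k λ^k`. -/
noncomputable def partZ (g h : ℕ → ℝ) (lam : ℝ) : ℝ :=
  ∑' k : ℕ, coefA g h k * lam ^ k

/-- The critical value `λ_c = liminf_{k → ∞} g(k+1)/h(k)` (as an extended real). -/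
noncomputable def lamCrit (g h : ℕ → ℝ) : EReal :=
  Filter.liminf (fun k : ℕ => ((g (k + 1) / h k : ℝ) : EReal)) Filter.atTop

/-- The probability mass function `Θ_λ({k}) = a_k λ^k / Z(λ)`. -/
noncomputable def thetaPMF (g h : ℕ → ℝ) (lam : ℝ) (k : ℕ) : ℝ :=
  coefA g h k * lam ^ k / partZ g h lam

open MeasureTheory

/-- Euclidean norm of a lattice point `d ∈ ℤ^n`. -/
noncomputable def latNorm (n : ℕ) (d : Fin n → ℤ) : ℝ :=
  Real.sqrt (∑ i, ((d i : ℝ)) ^ 2)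

/-- The configuration `η^{x,y}` obtained from `η` by moving a particle from `x` to `y`
(the subtraction at `x` is truncated at `0`, immaterial as `g(0) = 0`). -/
def moveConf (n : ℕ) (η : (Fin n → ℤ) → ℕ) (x y : Fin n → ℤ) : (Fin n → ℤ) → ℕ :=
  fun z => if z = x then η x - 1 else if z = y then η y + 1 else η z

lemma latNorm_summable (n : ℕ) (α : ℝ) (hα : 0 < α) :
    Summable (fun d : Fin n → ℤ => latNorm n d ^ (-((n : ℝ) + α))) := by
  let b : Module.Basis (Fin n) ℝ (EuclideanSpace ℝ (Fin n)) := (EuclideanSpace.basisFun (Fin n) ℝ).toBasis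
  let L : Submodule ℤ (EuclideanSpace ℝ (Fin n)) := Submodule.span ℤ (Set.range b)
  have hrank : Module.finrank ℤ L = n := by
    rw [ZLattice.rank ℝ L]
    simp
  have hs := ZLattice.summable_norm_rpow L (-((n : ℝ) + α)) (by rw [hrank]; linarith)
  let e : (Fin n → ℤ) → L := fun d => ⟨∑ i, d i • b i,
    Submodule.sum_mem _ fun i _ => Submodule.smul_mem _ _ (Submodule.subset_span ⟨i, rfl⟩)⟩
  have hcoord : ∀ (d : Fin n → ℤ) (j : Fin n), ((e d : EuclideanSpace ℝ (Fin n))) j = (d j : ℝ) := by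
    intro d j
    have h1 : (e d : EuclideanSpace ℝ (Fin n)) = ∑ i, (d i : ℝ) • b i := by
      simp only [e, Int.cast_smul_eq_zsmul]
    rw [h1]
    simp [b, Pi.single_apply]
  have hinj : Function.Injective e := by
    intro d d' hdd
    funext j
    have h1 := hcoord d j
    rw [hdd, hcoord d' j] at h1
    exact (Int.cast_injective (α := ℝ) h1).symm
  refine (hs.comp_injective hinj).congr fun d => ?_
  have : latNorm n d = ‖e d‖ := by
    rw [Submodule.coe_norm, EuclideanSpace.norm_eq, latNorm]
    congr 1
    refine Finset.sum_congr rfl fun i _ => ?_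
    rw [hcoord]
    simp
  simp [this]

lemma theta_nonneg (g h : ℕ → ℝ) (hg : ∀ k : ℕ, 1 ≤ k → 0 < g k) (hh : ∀ k : ℕ, 0 < h k)
    (lam : ℝ) (hlam0 : 0 ≤ lam) (k : ℕ) : 0 ≤ thetaPMF g h lam k := by
  have hc : ∀ k, 0 ≤ coefA g h k * lam ^ k := fun k =>
    mul_nonneg (div_nonneg (Finset.prod_nonneg fun i _ => (hh i).le)
      (Finset.prod_nonneg fun i _ => (hg _ (by omega)).le)) (pow_nonneg hlam0 _)
  exact div_nonneg (hc k) (tsum_nonneg hc)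

lemma theta_succ (g h : ℕ → ℝ) (hg : ∀ k : ℕ, 1 ≤ k → 0 < g k)
    (lam : ℝ) (k : ℕ) :
    g (k + 1) * thetaPMF g h lam (k + 1) = lam * (h k * thetaPMF g h lam k) := by
  have h1 := (hg (k + 1) (by omega)).ne'
  have h2 : (∏ j ∈ Finset.range k, g (j + 1)) ≠ 0 :=
    Finset.prod_ne_zero_iff.2 fun i _ => (hg _ (by omega)).ne'
  have : g (k + 1) * coefA g h (k + 1) = h k * coefA g h k := by
    unfold coefA
    rw [Finset.prod_range_succ, Finset.prod_range_succ]
    field_simp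
  unfold thetaPMF
  rw [pow_succ]
  linear_combination (lam ^ k * lam / partZ g h lam) * this

/-- Two measures that agree on the cylinders over `T` integrate functions of the coordinates in
`T` in the same way. -/
lemma integral_eq_of_cyl {I : Type*} (μ₁ μ₂ : Measure (I → ℕ)) (T : Finset I)
    (hT : ∀ vals : I → ℕ, μ₁ {η | ∀ x ∈ T, η x = vals x} = μ₂ {η | ∀ x ∈ T, η x = vals x})
    (φ : (I → ℕ) → ℝ) (hφ : ∀ η η' : I → ℕ, (∀ x ∈ T, η x = η' x) → φ η = φ η') :
    ∫ η, φ η ∂μ₁ = ∫ η, φ η ∂μ₂ := by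
  classical
  let r : (I → ℕ) → (T → ℕ) := fun η s => η s
  have hr : Measurable r := measurable_pi_iff.2 fun s => measurable_pi_apply _
  let E : (T → ℕ) → (I → ℕ) := fun v z => if hz : z ∈ T then v ⟨z, hz⟩ else 0
  have hφE : ∀ η, φ η = φ (E (r η)) := fun η => hφ _ _ fun x hx => by simp [E, r, hx]
  have hm : Measurable (fun v => φ (E v)) := measurable_of_countable _
  have key : μ₁.map r = μ₂.map r := by
    refine Measure.ext_of_singleton fun v => ?_
    rw [Measure.map_apply hr (measurableSet_singleton _),
      Measure.map_apply hr (measurableSet_singleton _)]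
    have : r ⁻¹' {v} = {η | ∀ x ∈ T, η x = E v x} := by
      ext η
      simp only [Set.mem_preimage, Set.mem_singleton_iff, Set.mem_ofPred_eq]
      constructor
      · rintro rfl x hx
        simp [E, r, hx]
      · intro H
        ext s
        have := H s s.2
        simpa [E, r] using this
    rw [this]
    exact hT _
  rw [integral_congr_ae (Filter.Eventually.of_forall hφE : φ =ᵐ[μ₁] fun η => φ (E (r η))),
    integral_congr_ae (Filter.Eventually.of_forall hφE : φ =ᵐ[μ₂] fun η => φ (E (r η)))]
  rw [← integral_map (φ := r) (f := fun v => φ (E v)) hr.aemeasurable hm.aestronglyMeasurable,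
    ← integral_map (φ := r) (f := fun v => φ (E v)) hr.aemeasurable hm.aestronglyMeasurable, key]

lemma measurableSet_cyl {I : Type*} (T : Finset I) (vals : I → ℕ) :
    MeasurableSet {η : I → ℕ | ∀ x ∈ T, η x = vals x} := by
  have : {η : I → ℕ | ∀ x ∈ T, η x = vals x} = ⋂ x ∈ T, {η | η x = vals x} := by
    ext; simp
  rw [this]
  exact T.measurableSet_biInter fun x _ => (measurable_pi_apply x) (measurableSet_singleton _)

lemma swap_invariance {I : Type*} [DecidableEq I] (ν : Measure (I → ℕ)) (θ : ℕ → ENNReal)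
    (hν : ∀ (S : Finset I) (vals : I → ℕ),
        ν {η | ∀ x ∈ S, η x = vals x} = ∏ x ∈ S, θ (vals x))
    (g : ℕ → ℝ) (f : (I → ℕ) → ℝ) (hfm : Measurable f)
    (S : Finset I) (hfS : ∀ η η' : I → ℕ, (∀ x ∈ S, η x = η' x) → f η = f η')
    (x y : I) (hx : x ∉ S) (hy : y ∉ S) :
    ∫ η, g (η x) * f η ∂ν = ∫ η, g (η y) * f η ∂ν := by
  let σ := Equiv.swap x y
  let r : (I → ℕ) → (I → ℕ) := fun η z => η (σ z)
  have hr : Measurable r := measurable_pi_iff.2 fun s => measurable_pi_apply _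
  have hφm : Measurable fun η : I → ℕ => g (η x) * f η :=
    ((measurable_of_countable g).comp (measurable_pi_apply x)).mul hfm
  have h1 : ∫ η, g (η x) * f η ∂(ν.map r) = ∫ η, g (η x) * f η ∂ν := by
    refine integral_eq_of_cyl _ _ (insert x S) (fun vals => ?_) _ fun η η' H => ?_
    · rw [Measure.map_apply hr (measurableSet_cyl _ _), hν]
      have : r ⁻¹' {η | ∀ z ∈ insert x S, η z = vals z}
          = {η | ∀ z ∈ (insert x S).map σ.toEmbedding, η z = vals (σ z)} := by
        ext η
        simp only [Set.mem_preimage, Set.mem_ofPred_eq, Finset.forall_mem_map, r]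
        simp [σ]
      rw [this, hν, Finset.prod_map]
      simp [σ]
    · rw [H x (by simp), hfS η η' fun z hz => H z (by simp [hz])]
  rw [← h1, integral_map hr.aemeasurable hφm.aestronglyMeasurable]
  refine integral_congr_ae (Filter.Eventually.of_forall fun η => ?_)
  have : f (r η) = f η := hfS _ _ fun z hz => by
    have : σ z = z := Equiv.swap_apply_of_ne_of_ne (fun e => hx (e ▸ hz)) (fun e => hy (e ▸ hz))
    simp [r, this]
  simp [this, r, σ]

lemma measurable_moveConf (n : ℕ) (x y : Fin n → ℤ) :
    Measurable fun η => moveConf n η x y := by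
  refine measurable_pi_iff.2 fun z => ?_
  unfold moveConf
  split_ifs
  · exact (measurable_of_countable fun k : ℕ => k - 1).comp (measurable_pi_apply x)
  · exact (measurable_of_countable fun k : ℕ => k + 1).comp (measurable_pi_apply y)
  · exact measurable_pi_apply z

lemma move_integral (n : ℕ) (g h θ : ℕ → ℝ) (hg0 : g 0 = 0)
    (hgn : ∀ k, 0 ≤ g k) (hhn : ∀ k, 0 ≤ h k) (hθ : ∀ k, 0 ≤ θ k) (lam : ℝ)
    (hsucc : ∀ k, g (k + 1) * θ (k + 1) = lam * (h k * θ k))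
    (ν : Measure ((Fin n → ℤ) → ℕ))
    (hν : ∀ (S : Finset (Fin n → ℤ)) (vals : (Fin n → ℤ) → ℕ),
        ν {η | ∀ x ∈ S, η x = vals x} = ∏ x ∈ S, ENNReal.ofReal (θ (vals x)))
    (f : ((Fin n → ℤ) → ℕ) → ℝ) (hfm : Measurable f)
    (S : Finset (Fin n → ℤ))
    (hfS : ∀ η η' : (Fin n → ℤ) → ℕ, (∀ x ∈ S, η x = η' x) → f η = f η')
    (x y : Fin n → ℤ) (hxy : x ≠ y) :
    ∫ η, g (η x) * h (η y) * f (moveConf n η x y) ∂ν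
      = ∫ η, g (η y) * h (η x) * f η ∂ν := by
  let w₁ : ((Fin n → ℤ) → ℕ) → ENNReal := fun η => ENNReal.ofReal (g (η x) * h (η y))
  let w₂ : ((Fin n → ℤ) → ℕ) → ENNReal := fun η => ENNReal.ofReal (g (η y) * h (η x))
  have hgm : ∀ z, Measurable fun η : (Fin n → ℤ) → ℕ => g (η z) := fun z =>
    (measurable_of_countable g).comp (measurable_pi_apply z)
  have hhm : ∀ z, Measurable fun η : (Fin n → ℤ) → ℕ => h (η z) := fun z =>
    (measurable_of_countable h).comp (measurable_pi_apply z)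
  have hw₁ : Measurable w₁ := ((hgm x).mul (hhm y)).ennreal_ofReal
  have hw₂ : Measurable w₂ := ((hgm y).mul (hhm x)).ennreal_ofReal
  have hmv := measurable_moveConf n x y
  have key : ∫ η, f η ∂((ν.withDensity w₁).map fun η => moveConf n η x y)
      = ∫ η, f η ∂(ν.withDensity w₂) := by
    refine integral_eq_of_cyl _ _ (insert x (insert y (S \ {x, y}))) (fun vals => ?_) _
      fun η η' H => hfS η η' fun z hz => H z (by
        by_cases h1 : z = x
        · simp [h1]
        · by_cases h2 : z = y
          · simp [h2]
          · simp [h1, h2, hz])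
    set T := insert x (insert y (S \ {x, y})) with hT
    have hCm := measurableSet_cyl T vals
    rw [Measure.map_apply hmv hCm, withDensity_apply _ (hmv hCm), withDensity_apply _ hCm,
      ← lintegral_indicator (hmv hCm), ← lintegral_indicator hCm]
    have e2 : ∀ η, Set.indicator {η | ∀ x ∈ T, η x = vals x} w₂ η
        = Set.indicator {η | ∀ x ∈ T, η x = vals x} (fun _ => w₂ vals) η := by
      intro η
      refine Set.indicator_congr (f := w₂) (g := fun _ => w₂ vals) ?_ ▸ rfl
      intro η' hη'
      have hx' := hη' x (by simp [hT])
      have hy' := hη' y (by simp [hT])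
      simp [w₂, hx', hy']
    simp_rw [e2]
    rw [lintegral_indicator hCm, lintegral_const, Measure.restrict_apply_univ, hν]
    obtain hy0 | ⟨l, hl⟩ : vals y = 0 ∨ ∃ l, vals y = l + 1 := by
      rcases vals y with _ | l
      · simp
      · right; exact ⟨l, rfl⟩
    · have e1 : (fun η => moveConf n η x y) ⁻¹' {η | ∀ x ∈ T, η x = vals x} = ∅ := by
        ext η
        simp only [Set.mem_preimage, Set.mem_ofPred_eq, Set.mem_empty_iff_false, iff_false]
        intro H
        have := H y (by simp [hT])
        simp [moveConf, hxy.symm, hy0] at this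
      rw [e1]
      simp [w₂, hy0, hg0]
    · let vals' : (Fin n → ℤ) → ℕ :=
        fun z => if z = x then vals x + 1 else if z = y then l else vals z
      have hv'x : vals' x = vals x + 1 := by simp [vals']
      have hv'y : vals' y = l := by simp [vals', hxy.symm]
      have hv'z : ∀ z, z ≠ x → z ≠ y → vals' z = vals z := fun z h1 h2 => by
        simp [vals', h1, h2]
      have hC'm := measurableSet_cyl T vals'
      have e1 : ∀ η, Set.indicator
          ((fun η => moveConf n η x y) ⁻¹' {η | ∀ x ∈ T, η x = vals x}) w₁ η
          = Set.indicator {η | ∀ x ∈ T, η x = vals' x} (fun _ => w₁ vals') η := by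
        intro η
        by_cases hη : η ∈ {η : (Fin n → ℤ) → ℕ | ∀ x ∈ T, η x = vals' x}
        · rw [Set.indicator_of_mem hη, Set.indicator_of_mem]
          · have hx' := hη x (by simp [hT])
            have hy' := hη y (by simp [hT])
            simp [w₁, hx', hy']
          · intro z hz
            have hzz := hη z hz
            have hx' := hη x (by simp [hT])
            have hy' := hη y (by simp [hT])
            by_cases h1 : z = x
            · subst h1
              simp [moveConf, hx', hv'x]
            · by_cases h2 : z = y
              · subst h2
                simp [moveConf, h1, hy', hv'y, hl]
              · simp [moveConf, h1, h2, hzz, hv'z z h1 h2]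
        · rw [Set.indicator_of_notMem hη]
          by_cases hx0 : η x = 0
          · refine Set.indicator_apply_eq_zero.2 fun _ => ?_
            simp [w₁, hx0, hg0]
          · refine Set.indicator_of_notMem (fun H => hη ?_) _
            intro z hz
            have Hz := H z hz
            by_cases h1 : z = x
            · subst h1
              simp [moveConf] at Hz
              rw [hv'x]; omega
            · by_cases h2 : z = y
              · subst h2
                simp [moveConf, h1] at Hz
                rw [hv'y]; omega
              · simp [moveConf, h1, h2] at Hz
                rw [hv'z z h1 h2]; exact Hz
      simp_rw [e1]
      rw [lintegral_indicator hC'm, lintegral_const, Measure.restrict_apply_univ, hν, hT,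
        Finset.prod_insert (by simp [hxy]), Finset.prod_insert (by simp),
        Finset.prod_insert (by simp [hxy]), Finset.prod_insert (by simp)]
      have hrest : ∏ z ∈ S \ {x, y}, ENNReal.ofReal (θ (vals' z))
          = ∏ z ∈ S \ {x, y}, ENNReal.ofReal (θ (vals z)) := by
        refine Finset.prod_congr rfl fun z hz => ?_
        simp at hz
        rw [hv'z z (by tauto) (by tauto)]
      rw [hrest, ← mul_assoc (ENNReal.ofReal _), ← mul_assoc, ← mul_assoc (ENNReal.ofReal _),
        ← mul_assoc]
      congr 1
      rw [mul_assoc, mul_assoc (w₂ vals), ← ENNReal.ofReal_mul (hθ _), ← ENNReal.ofReal_mul (hθ _),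
        show w₂ vals = ENNReal.ofReal (g (vals y) * h (vals x)) from rfl,
        ← ENNReal.ofReal_mul (mul_nonneg (hgn _) (hhn _)),
        ← ENNReal.ofReal_mul (mul_nonneg (hgn _) (hhn _)), hv'x, hv'y, hl]
      congr 1
      linear_combination (h l * θ l) * hsucc (vals x) - (h (vals x) * θ (vals x)) * hsucc l
  rw [integral_map hmv.aemeasurable hfm.aestronglyMeasurable,
    integral_withDensity_eq_integral_toReal_smul hw₁ (by simp [w₁]),
    integral_withDensity_eq_integral_toReal_smul hw₂ (by simp [w₂])] at key
  simpa only [w₁, w₂, ENNReal.toReal_ofReal (mul_nonneg (hgn _) (hhn _)), smul_eq_mul] using key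

lemma integrable_g {I : Type*} (g h θ : ℕ → ℝ) (hg0 : g 0 = 0)
    (hgn : ∀ k, 0 ≤ g k) (hhn : ∀ k, 0 ≤ h k) (lam : ℝ) (hlam0 : 0 ≤ lam)
    (M : ℝ) (hM : ∀ k, h k ≤ M)
    (hsucc : ∀ k, g (k + 1) * θ (k + 1) = lam * (h k * θ k))
    (ν : Measure (I → ℕ)) [IsProbabilityMeasure ν]
    (hν : ∀ (S : Finset I) (vals : I → ℕ),
        ν {η | ∀ x ∈ S, η x = vals x} = ∏ x ∈ S, ENNReal.ofReal (θ (vals x)))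
    (x : I) : Integrable (fun η : I → ℕ => g (η x)) ν := by
  have hgm : Measurable g := measurable_of_countable g
  have hx : Measurable fun η : I → ℕ => η x := measurable_pi_apply x
  have hm : ∀ k, (ν.map fun η : I → ℕ => η x) {k} = ENNReal.ofReal (θ k) := by
    intro k
    rw [Measure.map_apply hx (measurableSet_singleton _)]
    have := hν {x} (fun _ => k)
    simp only [Finset.mem_singleton, forall_eq, Finset.prod_singleton] at this
    exact this
  have hprob : IsProbabilityMeasure (ν.map fun η : I → ℕ => η x) :=
    Measure.isProbabilityMeasure_map hx.aemeasurable
  have htot : ∑' k, ENNReal.ofReal (θ k) = 1 := by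
    have := lintegral_countable' (μ := ν.map fun η : I → ℕ => η x) (fun _ => 1)
    simp only [lintegral_const, one_mul, hm, measure_univ] at this
    exact this.symm
  refine ⟨(hgm.comp hx).aestronglyMeasurable, ?_⟩
  rw [hasFiniteIntegral_iff_ofReal (Filter.Eventually.of_forall fun η => hgn _)]
  rw [← lintegral_map (μ := ν) (f := fun k => ENNReal.ofReal (g k)) (g := fun η : I → ℕ => η x)
    hgm.ennreal_ofReal hx, lintegral_countable']
  simp only [hm]
  rw [tsum_eq_zero_add' ENNReal.summable]
  simp only [hg0, ENNReal.ofReal_zero, zero_mul, zero_add]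
  have hle : ∀ k, ENNReal.ofReal (g (k + 1)) * ENNReal.ofReal (θ (k + 1))
      ≤ ENNReal.ofReal (lam * M) * ENNReal.ofReal (θ k) := by
    intro k
    rw [← ENNReal.ofReal_mul (hgn _), hsucc, ← mul_assoc,
      ENNReal.ofReal_mul (mul_nonneg hlam0 (hhn k))]
    gcongr
    exact hM k
  refine lt_of_le_of_lt (ENNReal.tsum_le_tsum hle) ?_
  rw [ENNReal.tsum_mul_left, htot]
  simp

/-- Invariance of the product measure `ν = ⊗_x Θ_λ` for the decomposable
misanthrope generator with long-range totally asymmetric jump rate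
`p(d) = ‖d‖^{-(n+α)} 1(d > 0)`: for every bounded measurable cylinder function `f`,
the family `(x, d) ↦ p(d) ∫ g(η(x)) h(η(x+d)) (f(η^{x,x+d}) − f(η)) dν`
is absolutely summable with sum `0`. -/
theorem product_measure_invariance
    (n : ℕ) (hn : 0 < n) (α : ℝ) (hα : 0 < α)
    (g h : ℕ → ℝ) (hg0 : g 0 = 0) (hg : ∀ k : ℕ, 1 ≤ k → 0 < g k) (hh : ∀ k : ℕ, 0 < h k)
    (κ : ℝ) (hgLip : ∀ k : ℕ, |g (k + 1) - g k| ≤ κ)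
    (hhBdd : ∃ M : ℝ, ∀ k : ℕ, |h k| ≤ M)
    (hcomm : ∀ i j : ℕ, g i * h j - g j * h i = g i * h 0 - g j * h 0)
    (lam : ℝ) (hlam0 : 0 ≤ lam) (hlamc : (lam : EReal) < lamCrit g h)
    (ν : Measure ((Fin n → ℤ) → ℕ)) [IsProbabilityMeasure ν]
    (hν : ∀ (S : Finset (Fin n → ℤ)) (vals : (Fin n → ℤ) → ℕ),
        ν {η | ∀ x ∈ S, η x = vals x}
          = ∏ x ∈ S, ENNReal.ofReal (thetaPMF g h lam (vals x)))
    (f : ((Fin n → ℤ) → ℕ) → ℝ) (hfm : Measurable f) (hfb : ∃ M : ℝ, ∀ η, |f η| ≤ M)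
    (S : Finset (Fin n → ℤ))
    (hfS : ∀ η η' : (Fin n → ℤ) → ℕ, (∀ x ∈ S, η x = η' x) → f η = f η') :
    Summable (fun q : {q : (Fin n → ℤ) × (Fin n → ℤ) // 0 ≤ q.2 ∧ q.2 ≠ 0} =>
      |latNorm n q.1.2 ^ (-((n : ℝ) + α))
        * ∫ η, g (η q.1.1) * h (η (q.1.1 + q.1.2))
            * (f (moveConf n η q.1.1 (q.1.1 + q.1.2)) - f η) ∂ν|)
    ∧ (∑' q : {q : (Fin n → ℤ) × (Fin n → ℤ) // 0 ≤ q.2 ∧ q.2 ≠ 0},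
        latNorm n q.1.2 ^ (-((n : ℝ) + α))
          * ∫ η, g (η q.1.1) * h (η (q.1.1 + q.1.2))
              * (f (moveConf n η q.1.1 (q.1.1 + q.1.2)) - f η) ∂ν)
      = 0 := by
  obtain ⟨M, hM⟩ := hhBdd
  obtain ⟨B, hB⟩ := hfb
  have hgn : ∀ k, 0 ≤ g k := fun k => by
    rcases k with _ | k
    · exact hg0.ge
    · exact (hg _ (by omega)).le
  have hhn : ∀ k, 0 ≤ h k := fun k => (hh k).le
  have hθ := theta_nonneg g h hg hh lam hlam0
  have hsucc := theta_succ g h hg lam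
  have hgi : ∀ x, Integrable (fun η : (Fin n → ℤ) → ℕ => g (η x)) ν := fun x =>
    integrable_g g h _ hg0 hgn hhn lam hlam0 M (fun k => (le_abs_self _).trans (hM k)) hsucc ν hν x
  have hhm : ∀ z, Measurable fun η : (Fin n → ℤ) → ℕ => h (η z) := fun z =>
    (measurable_of_countable h).comp (measurable_pi_apply z)
  have hghi : ∀ x y, Integrable (fun η : (Fin n → ℤ) → ℕ => g (η x) * h (η y)) ν := fun x y =>
    (hgi x).mul_bdd (c := M) (hhm y).aestronglyMeasurable (Filter.Eventually.of_forall fun η => hM _)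
  have hgf : ∀ x, Integrable (fun η : (Fin n → ℤ) → ℕ => g (η x) * f η) ν := fun x =>
    (hgi x).mul_bdd (c := B) hfm.aestronglyMeasurable (Filter.Eventually.of_forall fun η => hB _)
  have hghf : ∀ x y, Integrable (fun η : (Fin n → ℤ) → ℕ => g (η x) * h (η y) * f η) ν :=
    fun x y => (hghi x y).mul_bdd (c := B) hfm.aestronglyMeasurable
      (Filter.Eventually.of_forall fun η => hB _)
  have hghfm : ∀ x y, Integrable
      (fun η : (Fin n → ℤ) → ℕ => g (η x) * h (η y) * f (moveConf n η x y)) ν :=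
    fun x y => (hghi x y).mul_bdd (c := B) (hfm.comp (measurable_moveConf n x y)).aestronglyMeasurable
      (Filter.Eventually.of_forall fun η => hB _)
  -- the one-site functional
  set G : (Fin n → ℤ) → ℝ := fun x => ∫ η, g (η x) * f η ∂ν with hG
  have hterm : ∀ x y : Fin n → ℤ, x ≠ y →
      ∫ η, g (η x) * h (η y) * (f (moveConf n η x y) - f η) ∂ν = h 0 * (G y - G x) := by
    intro x y hxy
    simp_rw [mul_sub]
    rw [integral_sub (hghfm x y) (hghf x y),
      move_integral n g h _ hg0 hgn hhn hθ lam hsucc ν hν f hfm S hfS x y hxy,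
      ← integral_sub (hghf y x) (hghf x y), hG]
    simp only
    rw [← integral_const_mul, ← integral_const_mul,
      ← integral_sub ((hgf y).const_mul _) ((hgf x).const_mul _)]
    congr 1
    ext η
    linear_combination f η * hcomm (η y) (η x)
  -- `G` is constant off `S`
  obtain ⟨c, hc⟩ : ∃ c, ∀ x ∉ S, G x = c := by
    by_cases hS : ∃ x, x ∉ S
    · obtain ⟨x₀, hx₀⟩ := hS
      exact ⟨G x₀, fun x hx => swap_invariance ν (fun k => ENNReal.ofReal (thetaPMF g h lam k))
        hν g f hfm S hfS x x₀ hx hx₀⟩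
    · push Not at hS
      exact ⟨0, fun x hx => absurd (hS x) hx⟩
  set p : (Fin n → ℤ) → ℝ := fun d => latNorm n d ^ (-((n : ℝ) + α)) with hp
  have hps : Summable p := latNorm_summable n α hα
  have hφs : Summable fun x => G x - c :=
    summable_of_ne_finset_zero (s := S) fun x hx => by rw [hc x hx, sub_self]
  let u : {q : (Fin n → ℤ) × (Fin n → ℤ) // 0 ≤ q.2 ∧ q.2 ≠ 0} → ℝ :=
    fun q => (G q.1.1 - c) * p q.1.2
  have hu : Summable u :=
    (summable_mul_of_summable_norm hφs.norm hps.norm).comp_injective Subtype.val_injective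
  let e : {q : (Fin n → ℤ) × (Fin n → ℤ) // 0 ≤ q.2 ∧ q.2 ≠ 0} ≃
      {q : (Fin n → ℤ) × (Fin n → ℤ) // 0 ≤ q.2 ∧ q.2 ≠ 0} :=
    { toFun := fun q => ⟨(q.1.1 + q.1.2, q.1.2), q.2⟩
      invFun := fun q => ⟨(q.1.1 - q.1.2, q.1.2), q.2⟩
      left_inv := fun q => by ext <;> simp
      right_inv := fun q => by ext <;> simp }
  have hue : HasSum (u ∘ e) (∑' q, u q) := e.hasSum_iff.2 hu.hasSum
  have hsum := (hue.sub hu.hasSum).mul_left (h 0)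
  rw [sub_self, mul_zero] at hsum
  have hfun : (fun q : {q : (Fin n → ℤ) × (Fin n → ℤ) // 0 ≤ q.2 ∧ q.2 ≠ 0} =>
      latNorm n q.1.2 ^ (-((n : ℝ) + α))
        * ∫ η, g (η q.1.1) * h (η (q.1.1 + q.1.2))
            * (f (moveConf n η q.1.1 (q.1.1 + q.1.2)) - f η) ∂ν)
      = fun q => h 0 * ((u ∘ e) q - u q) := by
    ext q
    rw [hterm q.1.1 (q.1.1 + q.1.2) (by simpa using q.2.2)]
    simp only [u, e, p, Function.comp, Equiv.coe_fn_mk]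
    ring
  rw [← hfun] at hsum
  exact ⟨hsum.summable.abs, hsum.tsum_eq⟩
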